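/- Let n ≥ 1 and 1 ≤ m ≤ n be integers, M ≥ 1 with a := (log(4M)/n)^{1/2} ≤ 1/3, and I_a := (1−2a, 1−a). Let 0 ≤ k ≤ n and let P be a nonzero polynomial of the form P(x) = Σ_{j=k}^{n} b_j a_j x^j with a_j ∈ [1, M], b_j ∈ {−1, 0, 1} for all j, and b_k ∈ {−1, 1}. Suppose that | ∫_0^1 P(1 − a − a x) · x^j dx | ≤ 2(n+1)M·2^{−n/m} for every j = 0, 1, …, m−1, and that P has exactly m−1 sign changes in I_a. Then (n/m)·log 2 ≤ (log 2 + 1)·m + log(2n+2) + log M + (c_1 + 4)·(log(4M))^{1/2}·n^{1/2}, where c_1 := 9π/√2. -/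

import Mathlib

/-- `P` has at least `q` sign changes in the set `s`: there are points
`t_0 < t_1 < ⋯ < t_q` in `s` with `P(t_{i-1}) P(t_i) < 0` for each `i`. -/
def SignChangesAtLeast (P : ℝ → ℝ) (s : Set ℝ) (q : ℕ) : Prop :=
  ∃ t : Fin (q + 1) → ℝ, StrictMono t ∧ (∀ i, t i ∈ s) ∧
    ∀ i : Fin q, P (t i.castSucc) * P (t i.succ) < 0

/-
Let `I = (1 - 2a, 1 - a)`. Multiplying `P` by a monic `Q` that vanishes at the sign changes of `P`
gives a product of constant sign, so `∫_I |P Q|` is a combination of the given moments and is tiny.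
By concavity of `log` this bounds `∫_I log |P| + ∫_I log |Q|` from above, and `∫_I log |y - t|` is
bounded below uniformly in `t`.

For the lower bound on `∫_I log |P|`, write `P = x ^ k * p` with coefficients of `p` bounded by `M`
and `1 ≤ |p(0)|`. Then `|p(w)| (1 - |w|) ≤ M` on the unit disc, and since `z (1 + z) / 2` touches
the unit circle only at `z = 1`, the polynomial `g(z) = p(z (1 + z) / 2) (1 - z) ^ 2` is bounded by
`8 M`. If `g` has no zeros in the disc, Harnack's inequality for `log (8 M) - log |g|` compares its
values near `1` with that at `0`. Reflecting a zero `ζ` across the unit circle costs the Green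
function with pole `ζ`, whose integral over `I` is at most `9 (1 - |ζ|) ≤ -9 log |ζ|`: exactly the
price at which the value at `0` accounts for this zero.
-/

open Polynomial Set MeasureTheory intervalIntegral
open scoped ComplexConjugate

section LogIntegral

lemma add_mul_log_half_le {u v : ℝ} (hu : 0 ≤ u) (hv : 0 ≤ v) :
    (u + v) * Real.log ((u + v) / 2) ≤ u * Real.log u + v * Real.log v := by
  have h := Real.convexOn_mul_log.2 (mem_Ici.2 hu) (mem_Ici.2 hv)
    (show (0 : ℝ) ≤ 1 / 2 by norm_num) (show (0 : ℝ) ≤ 1 / 2 by norm_num) (by norm_num)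
  simp only [smul_eq_mul] at h
  rw [show 1 / 2 * u + 1 / 2 * v = (u + v) / 2 by ring] at h
  linarith

lemma mul_log_half_le_sub {u v : ℝ} (hu : 0 ≤ u) (huv : u ≤ v) :
    (v - u) * Real.log ((v - u) / 2) ≤ v * Real.log v - u * Real.log u := by
  rcases huv.eq_or_lt with rfl | huv
  · simp
  have hhalf : Real.log ((v - u) / 2) ≤ Real.log v :=
    Real.log_le_log (by linarith) (by linarith)
  have hmul := mul_le_mul_of_nonneg_left hhalf (sub_pos.2 huv).le
  rcases hu.eq_or_lt with rfl | hu
  · simpa using hmul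
  have hlog := mul_le_mul_of_nonneg_left (Real.log_le_log hu huv.le) hu.le
  linarith

lemma intervalIntegrable_log_abs_sub (t α β : ℝ) :
    IntervalIntegrable (fun y ↦ Real.log |y - t|) volume α β := by
  simp only [Real.log_abs]
  simpa using (intervalIntegrable_log' (a := α - t) (b := β - t)).comp_sub_right t

lemma mul_log_half_sub_one_le_integral_log_abs_sub {α β : ℝ} (hαβ : α ≤ β) (t : ℝ) :
    (β - α) * (Real.log ((β - α) / 2) - 1) ≤ ∫ y in α..β, Real.log |y - t| := by
  simp only [Real.log_abs]
  rw [integral_comp_sub_right (fun y ↦ Real.log y) t, integral_log]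
  suffices (β - α) * Real.log ((β - α) / 2) ≤
      (β - t) * Real.log (β - t) - (α - t) * Real.log (α - t) by linarith
  rcases le_total t α with hα | hα
  · simpa using mul_log_half_le_sub (sub_nonneg.2 hα) (sub_le_sub_right hαβ t)
  rw [← Real.log_neg_eq_log (α - t), neg_sub]
  rcases le_total t β with hβ | hβ
  · have h := add_mul_log_half_le (sub_nonneg.2 hβ) (sub_nonneg.2 hα)
    rw [sub_add_sub_cancel] at h
    linarith
  · have h := mul_log_half_le_sub (sub_nonneg.2 hβ) (sub_le_sub_left hαβ t)
    rw [sub_sub_sub_cancel_left] at h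
    rw [← Real.log_neg_eq_log (β - t), neg_sub]
    linarith

lemma ae_eval_ne_zero {p : ℝ[X]} (hp : p ≠ 0) : ∀ᵐ x, p.eval x ≠ 0 := by
  filter_upwards [p.roots.toFinset.finite_toSet.countable.ae_notMem volume] with x hx
  simpa [hp] using hx

lemma intervalIntegrable_log_abs_eval (p : ℝ[X]) (α β : ℝ) :
    IntervalIntegrable (fun y ↦ Real.log |p.eval y|) volume α β := by
  have h : MeromorphicOn (fun y ↦ p.eval y) (uIcc α β) := fun y _ ↦
    (AnalyticOnNhd.eval_polynomial p y (mem_univ y)).meromorphicAt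
  exact h.intervalIntegrable_log_norm

lemma integral_log_abs_eval_mul {p q : ℝ[X]} (hp : p ≠ 0) (hq : q ≠ 0) (α β : ℝ) :
    ∫ y in α..β, Real.log |(p * q).eval y| =
      (∫ y in α..β, Real.log |p.eval y|) + ∫ y in α..β, Real.log |q.eval y| := by
  rw [← integral_add (intervalIntegrable_log_abs_eval p α β)
    (intervalIntegrable_log_abs_eval q α β)]
  refine integral_congr_ae ?_
  filter_upwards [ae_eval_ne_zero hp, ae_eval_ne_zero hq] with y hpy hqy _
  rw [eval_mul, abs_mul, Real.log_mul (abs_ne_zero.2 hpy) (abs_ne_zero.2 hqy)]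

lemma card_mul_le_integral_log_abs_eval_prod {α β : ℝ} (hαβ : α ≤ β) (Ξ : Multiset ℝ) :
    Ξ.card * ((β - α) * (Real.log ((β - α) / 2) - 1)) ≤
      ∫ y in α..β, Real.log |(Ξ.map (X - C ·)).prod.eval y| := by
  induction Ξ using Multiset.induction with
  | empty => simp
  | cons ξ Ξ ih =>
    rw [Multiset.map_cons, Multiset.prod_cons, integral_log_abs_eval_mul (X_sub_C_ne_zero ξ)
      (monic_multiset_prod_of_monic Ξ _ fun ξ _ ↦ monic_X_sub_C ξ).ne_zero, Multiset.card_cons]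
    simp only [eval_sub, eval_X, eval_C]
    push_cast
    linarith [mul_log_half_sub_one_le_integral_log_abs_sub hαβ ξ]

lemma integral_log_abs_eval_le {p : ℝ[X]} (hp : p ≠ 0) {α β E : ℝ} (hαβ : α ≤ β) (hE : 0 < E)
    (hpE : ∫ y in α..β, |p.eval y| ≤ (β - α) * E) :
    ∫ y in α..β, Real.log |p.eval y| ≤ (β - α) * Real.log E := by
  have htangent : ∀ y, p.eval y ≠ 0 → Real.log |p.eval y| ≤ |p.eval y| / E + (Real.log E - 1) := by
    intro y hy
    have h := Real.log_le_sub_one_of_pos (div_pos (abs_pos.2 hy) hE)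
    rw [Real.log_div (abs_ne_zero.2 hy) hE.ne'] at h
    linarith
  have hint : IntervalIntegrable (fun y ↦ |p.eval y| / E) volume α β :=
    (by fun_prop : Continuous fun y ↦ |p.eval y| / E).intervalIntegrable α β
  calc ∫ y in α..β, Real.log |p.eval y|
      ≤ ∫ y in α..β, (|p.eval y| / E + (Real.log E - 1)) :=
        integral_mono_ae hαβ (intervalIntegrable_log_abs_eval p α β)
          (hint.add intervalIntegrable_const) ((ae_eval_ne_zero hp).mono htangent)
    _ = (∫ y in α..β, |p.eval y|) / E + (β - α) * (Real.log E - 1) := by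
        rw [integral_add hint intervalIntegrable_const, intervalIntegral.integral_div,
          intervalIntegral.integral_const, smul_eq_mul]
    _ ≤ (β - α) * Real.log E := by linarith [(div_le_iff₀ hE).2 hpE]

end LogIntegral

section SignAlignment

variable {f : ℝ → ℝ} {α β : ℝ}

lemma signChangesAtLeast_snoc {s : Set ℝ} {q : ℕ} {t : Fin (q + 1) → ℝ} (ht : StrictMono t)
    (hts : ∀ i, t i ∈ s) (hsign : ∀ i : Fin q, f (t i.castSucc) * f (t i.succ) < 0)
    {x : ℝ} (hx : x ∈ s) (htx : t (Fin.last q) < x) (hfx : f (t (Fin.last q)) * f x < 0) :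
    SignChangesAtLeast f s (q + 1) := by
  refine ⟨Fin.snoc (α := fun _ ↦ ℝ) t x, Fin.strictMono_iff_lt_succ.2 ?_, ?_, ?_⟩ <;>
    intro i <;> refine Fin.lastCases ?_ (fun j ↦ ?_) i
  · rwa [Fin.snoc_castSucc, Fin.succ_last, Fin.snoc_last]
  · rw [Fin.snoc_castSucc, Fin.succ_castSucc, Fin.snoc_castSucc]
    exact ht Fin.castSucc_lt_succ
  · rwa [Fin.snoc_last]
  · rw [Fin.snoc_castSucc]
    exact hts j
  · rwa [Fin.snoc_castSucc, Fin.succ_last, Fin.snoc_last]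
  · rw [Fin.snoc_castSucc, Fin.succ_castSucc, Fin.snoc_castSucc]
    exact hsign j

lemma exists_sign_of_mul_nonneg {s : Set ℝ} (h : ∀ x ∈ s, ∀ y ∈ s, x < y → 0 ≤ f x * f y) :
    ∃ ε : ℝ, |ε| = 1 ∧ ∀ x ∈ s, 0 ≤ ε * f x := by
  by_cases hpos : ∃ x ∈ s, 0 < f x
  · obtain ⟨x, hx, hfx⟩ := hpos
    refine ⟨1, abs_one, fun y hy ↦ ?_⟩
    rw [one_mul]
    rcases lt_trichotomy x y with hxy | rfl | hyx
    · exact nonneg_of_mul_nonneg_right (h x hx y hy hxy) hfx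
    · exact hfx.le
    · exact nonneg_of_mul_nonneg_left (h y hy x hx hyx) hfx
  · push Not at hpos
    exact ⟨-1, by simp, fun y hy ↦ by linarith [hpos y hy]⟩

lemma exists_sign_of_not_signChangesAtLeast_one {s : Set ℝ} (h : ¬ SignChangesAtLeast f s 1) :
    ∃ ε : ℝ, |ε| = 1 ∧ ∀ x ∈ s, 0 ≤ ε * f x := by
  refine exists_sign_of_mul_nonneg fun x hx y hy hxy ↦ not_lt.1 fun hneg ↦ h ?_
  exact signChangesAtLeast_snoc (q := 0) (t := fun _ ↦ x)
    (Subsingleton.strictMono (α := Fin 1) _) (fun _ ↦ hx) Fin.elim0 hy hxy hneg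

lemma exists_last_sign_change (hαβ : α ≤ β) {q : ℕ}
    (h : ¬ SignChangesAtLeast f (Ioo α β) (q + 2)) :
    ∃ c ∈ Icc α β, ¬ SignChangesAtLeast f (Ioo α c) (q + 1) ∧
      ∃ ε : ℝ, |ε| = 1 ∧ ∀ x ∈ Ioo c β, 0 ≤ ε * f x := by
  set U := {x ∈ Icc α β | ¬ SignChangesAtLeast f (Ioo α x) (q + 1)}
  have hαU : α ∈ U := ⟨left_mem_Icc.2 hαβ, fun ⟨t, _, ht, _⟩ ↦ by simpa using ht 0⟩
  have hUβ : BddAbove U := ⟨β, fun x hx ↦ hx.1.2⟩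
  have hαc : α ≤ sSup U := le_csSup hUβ hαU
  refine ⟨sSup U, ⟨hαc, csSup_le ⟨α, hαU⟩ fun x hx ↦ hx.1.2⟩, ?_, ?_⟩
  · rintro ⟨t, ht, hts, hsign⟩
    obtain ⟨u, huU, htu⟩ := exists_lt_of_lt_csSup ⟨α, hαU⟩ (hts (Fin.last _)).2
    exact huU.2 ⟨t, ht, fun i ↦ ⟨(hts i).1, (ht.monotone (Fin.le_last i)).trans_lt htu⟩, hsign⟩
  · refine exists_sign_of_mul_nonneg fun x hx y hy hxy ↦ ?_
    have hxU : x ∉ U := fun hxU ↦ (le_csSup hUβ hxU).not_gt hx.1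
    obtain ⟨t, ht, hts, hsign⟩ : SignChangesAtLeast f (Ioo α x) (q + 1) :=
      not_not.1 fun hx' ↦ hxU ⟨⟨hαc.trans hx.1.le, hx.2.le⟩, hx'⟩
    set v := t (Fin.last _)
    have hagree : ∀ z ∈ Ioo (sSup U) β, x ≤ z → 0 ≤ f v * f z := fun z hz hxz ↦
      not_lt.1 fun hneg ↦ h <| signChangesAtLeast_snoc ht
        (fun i ↦ ⟨(hts i).1, (hts i).2.trans hx.2⟩) hsign ⟨hαc.trans_lt hz.1, hz.2⟩
        ((hts _).2.trans_le hxz) hneg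
    have hfv : f v ≠ 0 := right_ne_zero_of_mul (hsign (Fin.last q)).ne
    refine nonneg_of_mul_nonneg_right ?_ (sq_pos_of_ne_zero hfv)
    calc 0 ≤ (f v * f x) * (f v * f y) := mul_nonneg (hagree x hx le_rfl) (hagree y hy hxy.le)
      _ = f v ^ 2 * (f x * f y) := by ring

lemma exists_roots_aligning_sign {q : ℕ} : ∀ {β : ℝ}, α ≤ β →
    ¬ SignChangesAtLeast f (Ioo α β) (q + 1) →
    ∃ Ξ : Multiset ℝ, Ξ.card ≤ q ∧ (∀ ξ ∈ Ξ, ξ ∈ Icc α β) ∧ ∃ ε : ℝ, |ε| = 1 ∧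
      ∀ᵐ x, x ∈ Ioo α β → 0 ≤ ε * (f x * (Ξ.map (X - C ·)).prod.eval x) := by
  induction q with
  | zero =>
    intro β _ h
    obtain ⟨ε, hε, hsign⟩ := exists_sign_of_not_signChangesAtLeast_one h
    exact ⟨0, le_rfl, by simp, ε, hε, ae_of_all _ fun x hx ↦ by simpa using hsign x hx⟩
  | succ q ih =>
    intro β hαβ h
    obtain ⟨c, hc, hleft, σ, hσ, hright⟩ := exists_last_sign_change hαβ h
    obtain ⟨Ξ, hcard, hΞ, ε, hε, hsign⟩ := ih hc.1 hleft
    have hΞβ : ∀ ξ ∈ Ξ, ξ ∈ Icc α β := fun ξ hξ ↦ ⟨(hΞ ξ hξ).1, (hΞ ξ hξ).2.trans hc.2⟩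
    have hQ : ∀ x, c < x → 0 ≤ (Ξ.map (X - C ·)).prod.eval x := fun x hx ↦ by
      rw [eval_multiset_prod, Multiset.map_map]
      refine Multiset.prod_nonneg fun z hz ↦ ?_
      obtain ⟨ξ, hξ, rfl⟩ := Multiset.mem_map.1 hz
      simpa using (hΞ ξ hξ).2.trans hx.le
    rcases abs_eq_abs.1 (hσ.trans hε.symm) with rfl | rfl
    · refine ⟨Ξ, by omega, hΞβ, σ, hσ, ?_⟩
      filter_upwards [hsign, Measure.ae_ne volume c] with x hx hxc hxI
      rcases hxc.lt_or_gt with hlt | hgt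
      · exact hx ⟨hxI.1, hlt⟩
      · rw [← mul_assoc]
        exact mul_nonneg (hright x ⟨hgt, hxI.2⟩) (hQ x hgt)
    · refine ⟨c ::ₘ Ξ, by simpa using hcard, ?_, -ε, hσ, ?_⟩
      · simpa using ⟨hc, hΞβ⟩
      filter_upwards [hsign, Measure.ae_ne volume c] with x hx hxc hxI
      rw [Multiset.map_cons, Multiset.prod_cons, eval_mul, eval_sub, eval_X, eval_C]
      rcases hxc.lt_or_gt with hlt | hgt
      · calc 0 ≤ ε * (f x * (Ξ.map (X - C ·)).prod.eval x) * (c - x) :=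
              mul_nonneg (hx ⟨hxI.1, hlt⟩) (sub_nonneg.2 hlt.le)
          _ = _ := by ring
      · calc 0 ≤ (-ε * f x) * (Ξ.map (X - C ·)).prod.eval x * (x - c) :=
              mul_nonneg (mul_nonneg (hright x ⟨hgt, hxI.2⟩) (hQ x hgt)) (sub_nonneg.2 hgt.le)
          _ = _ := by ring

end SignAlignment

section Moments

lemma abs_integral_mul_prod_affine_le {f : ℝ → ℝ} (hf : Continuous f) {a c R δ : ℝ} {N : ℕ}
    (hmom : ∀ j ≤ N, |∫ x in (0 : ℝ)..1, f x * x ^ j| ≤ δ) (Ξ : Multiset ℝ)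
    (hΞ : ∀ ξ ∈ Ξ, |c - ξ| + |a| ≤ R) {i : ℕ} (hi : i + Ξ.card ≤ N) :
    |∫ x in (0 : ℝ)..1, f x * x ^ i * (Ξ.map (X - C ·)).prod.eval (c - a * x)| ≤
      R ^ Ξ.card * δ := by
  induction Ξ using Multiset.induction generalizing i with
  | empty => simpa using hmom i (by simpa using hi)
  | cons ξ Ξ ih =>
    rw [Multiset.forall_mem_cons] at hΞ
    rw [Multiset.card_cons] at hi
    set Q := (Ξ.map (X - C ·)).prod
    have hsplit : ∫ x in (0 : ℝ)..1, f x * x ^ i * ((X - C ξ) * Q).eval (c - a * x) =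
        (c - ξ) * (∫ x in (0 : ℝ)..1, f x * x ^ i * Q.eval (c - a * x)) -
          a * ∫ x in (0 : ℝ)..1, f x * x ^ (i + 1) * Q.eval (c - a * x) := by
      rw [← intervalIntegral.integral_const_mul, ← intervalIntegral.integral_const_mul,
        ← intervalIntegral.integral_sub]
      · congr 1 with x
        rw [eval_mul, eval_sub, eval_X, eval_C]
        ring
      all_goals exact Continuous.intervalIntegrable (by fun_prop) _ _
    have hsame := ih hΞ.2 (i := i) (by omega)
    have hnext := ih hΞ.2 (i := i + 1) (by omega)
    have hbound := (abs_nonneg _).trans hsame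
    rw [Multiset.map_cons, Multiset.prod_cons, Multiset.card_cons, hsplit]
    calc _ ≤ |c - ξ| * (R ^ Ξ.card * δ) + |a| * (R ^ Ξ.card * δ) := by
          refine (abs_sub _ _).trans ?_
          rw [abs_mul, abs_mul]
          gcongr
      _ = (|c - ξ| + |a|) * (R ^ Ξ.card * δ) := by ring
      _ ≤ R * (R ^ Ξ.card * δ) := by gcongr; exact hΞ.1
      _ = R ^ (Ξ.card + 1) * δ := by ring

end Moments

section UnitDisc

lemma harmonic_le_mul_center {u : ℂ → ℝ} {c w : ℂ} {R : ℝ}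
    (hu : InnerProductSpace.HarmonicOnNhd u (Metric.closedBall c R))
    (hu0 : ∀ z ∈ Metric.sphere c R, 0 ≤ u z) (hw : w ∈ Metric.ball c R) :
    u w ≤ (R + ‖w - c‖) / (R - ‖w - c‖) * u c := by
  have hR : |R| = R := abs_of_pos (Metric.pos_of_mem_ball hw)
  have hcont : ContinuousOn u (Metric.sphere c |R|) :=
    hu.continuousOn.mono (by rw [hR]; exact Metric.sphere_subset_closedBall)
  have hkernel :=
    Complex.continuous_re.comp_continuousOn (continuousOn_herglotzRieszKernel_sphere hw)
  have hmean : Real.circleAverage u c R = u c :=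
    InnerProductSpace.HarmonicOnNhd.circleAverage_eq (by rwa [hR])
  rw [← hu.circleAverage_re_herglotzRieszKernel_smul hw, ← hmean, ← smul_eq_mul,
    ← Real.circleAverage_smul]
  refine Real.circleAverage_mono (hkernel.smul hcont).circleIntegrable'
    (hcont.const_smul _).circleIntegrable' fun z hz ↦ ?_
  rw [hR] at hz
  exact mul_le_mul_of_nonneg_right (re_herglotzRieszKernel_le hz hw) (hu0 z hz)

lemma log_sub_log_norm_le_mul_center {g : ℂ → ℂ} {c w : ℂ} {R B : ℝ}
    (hg : AnalyticOnNhd ℂ g (Metric.closedBall c R)) (hg0 : ∀ z ∈ Metric.closedBall c R, g z ≠ 0)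
    (hgB : ∀ z ∈ Metric.sphere c R, ‖g z‖ ≤ B) (hw : w ∈ Metric.ball c R) :
    Real.log B - Real.log ‖g w‖ ≤
      (R + ‖w - c‖) / (R - ‖w - c‖) * (Real.log B - Real.log ‖g c‖) := by
  refine harmonic_le_mul_center (u := fun z ↦ Real.log B - Real.log ‖g z‖) (fun z hz ↦
    (InnerProductSpace.harmonicAt_const _).sub ((hg z hz).harmonicAt_log_norm (hg0 z hz))) ?_ hw
  exact fun z hz ↦ sub_nonneg.2 <| Real.log_le_log
    (norm_pos_iff.2 (hg0 z (Metric.sphere_subset_closedBall hz))) (hgB z hz)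

lemma norm_eval_le_of_forall_norm_eq_one {p : ℂ[X]} {B : ℝ}
    (hp : ∀ w : ℂ, ‖w‖ = 1 → ‖p.eval w‖ ≤ B) {z : ℂ} (hz : ‖z‖ ≤ 1) : ‖p.eval z‖ ≤ B := by
  refine Complex.norm_le_of_forall_mem_frontier_norm_le (f := fun z ↦ p.eval z)
    (Metric.isBounded_ball (x := 0) (r := 1)) p.differentiable.diffContOnCl (fun w hw ↦ ?_) ?_
  · rw [frontier_ball _ one_ne_zero] at hw
    exact hp w (by simpa using hw)
  · rw [closure_ball _ one_ne_zero]
    simpa using hz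

/-- The Green function of the unit disc with pole `ζ`. -/
noncomputable def greenKernel (ζ z : ℂ) : ℝ :=
  Real.log ‖1 - conj ζ * z‖ - Real.log ‖z - ζ‖

lemma norm_one_sub_conj_mul_sq (ζ z : ℂ) :
    ‖1 - conj ζ * z‖ ^ 2 = ‖z - ζ‖ ^ 2 + (1 - ‖z‖ ^ 2) * (1 - ‖ζ‖ ^ 2) := by
  simp only [Complex.sq_norm, Complex.normSq_apply, Complex.sub_re, Complex.sub_im, Complex.mul_re,
    Complex.mul_im, Complex.conj_re, Complex.conj_im, Complex.one_re, Complex.one_im]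
  ring

lemma one_sub_conj_mul_ne_zero {ζ z : ℂ} (hζ : ‖ζ‖ < 1) (hz : ‖z‖ ≤ 1) : 1 - conj ζ * z ≠ 0 := by
  refine sub_ne_zero.2 fun h ↦ ?_
  have h1 : 1 = ‖ζ‖ * ‖z‖ := by simpa using congrArg norm h
  nlinarith [norm_nonneg ζ, norm_nonneg z]

lemma greenKernel_le {ζ z : ℂ} (hζ : ‖ζ‖ < 1) (hz : ‖z‖ < 1) (hne : ‖z‖ ≠ ‖ζ‖) :
    greenKernel ζ z ≤ Real.log (1 - ‖z‖ * ‖ζ‖) - Real.log |‖z‖ - ‖ζ‖| := by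
  have hrad : 0 < |‖z‖ - ‖ζ‖| := abs_pos.2 (sub_ne_zero.2 hne)
  have hdist : |‖z‖ - ‖ζ‖| ≤ ‖z - ζ‖ := abs_norm_sub_norm_le z ζ
  have hreflect : 0 < ‖1 - conj ζ * z‖ := norm_pos_iff.2 (one_sub_conj_mul_ne_zero hζ hz.le)
  have hprod : 0 < 1 - ‖z‖ * ‖ζ‖ := by nlinarith [norm_nonneg ζ, norm_nonneg z]
  have hdefect : 0 ≤ (1 - ‖z‖ ^ 2) * (1 - ‖ζ‖ ^ 2) := by
    refine mul_nonneg ?_ ?_ <;> nlinarith [norm_nonneg ζ, norm_nonneg z]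
  have hcross : ‖1 - conj ζ * z‖ * |‖z‖ - ‖ζ‖| ≤ (1 - ‖z‖ * ‖ζ‖) * ‖z - ζ‖ := by
    refine (sq_le_sq₀ (by positivity) (by positivity)).1 ?_
    have hsq := mul_le_mul_of_nonneg_left (pow_le_pow_left₀ hrad.le hdist 2) hdefect
    rw [mul_pow, mul_pow, norm_one_sub_conj_mul_sq]
    rw [sq_abs] at hsq ⊢
    linarith [show (1 - ‖z‖ * ‖ζ‖) ^ 2 = (‖z‖ - ‖ζ‖) ^ 2 + (1 - ‖z‖ ^ 2) * (1 - ‖ζ‖ ^ 2) by ring,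
      show (1 - ‖z‖ * ‖ζ‖) ^ 2 * ‖z - ζ‖ ^ 2 = (‖z‖ - ‖ζ‖) ^ 2 * ‖z - ζ‖ ^ 2 +
        (1 - ‖z‖ ^ 2) * (1 - ‖ζ‖ ^ 2) * ‖z - ζ‖ ^ 2 by ring]
  have hlog := Real.log_le_log (by positivity) hcross
  rw [Real.log_mul hreflect.ne' hrad.ne', Real.log_mul hprod.ne' (hrad.trans_le hdist).ne'] at hlog
  unfold greenKernel
  linarith

end UnitDisc

section DiskPoint

/-- The inverse of `s ↦ s (1 + s) / 2` on `[0, 1]`, along which the disc estimates are pulled back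
to the interval. -/
noncomputable def diskPoint (y : ℝ) : ℝ :=
  (√(1 + 8 * y) - 1) / 2

variable {y : ℝ}

lemma diskPoint_mul_one_add (hy : 0 ≤ y) : diskPoint y * (1 + diskPoint y) / 2 = y := by
  have h := Real.sq_sqrt (show 0 ≤ 1 + 8 * y by linarith)
  unfold diskPoint
  linarith

lemma diskPoint_nonneg (hy : 0 ≤ y) : 0 ≤ diskPoint y := by
  have h := Real.one_le_sqrt.2 (show 1 ≤ 1 + 8 * y by linarith)
  unfold diskPoint
  linarith

lemma diskPoint_le_one (hy : y ≤ 1) : diskPoint y ≤ 1 := by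
  have h := Real.sqrt_le_sqrt (show 1 + 8 * y ≤ 3 ^ 2 by linarith)
  rw [Real.sqrt_sq zero_le_three] at h
  unfold diskPoint
  linarith

lemma one_sub_diskPoint_le (hy : 0 ≤ y) (hy1 : y ≤ 1) : 1 - diskPoint y ≤ 1 - y := by
  nlinarith [diskPoint_mul_one_add hy, diskPoint_nonneg hy, diskPoint_le_one hy1]

lemma le_one_sub_diskPoint (hy : 0 ≤ y) (hy1 : y ≤ 1) : 2 / 3 * (1 - y) ≤ 1 - diskPoint y := by
  nlinarith [diskPoint_mul_one_add hy, diskPoint_nonneg hy, diskPoint_le_one hy1]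

lemma norm_diskPoint (hy : 0 ≤ y) : ‖(diskPoint y : ℂ)‖ = diskPoint y := by
  rw [Complex.norm_real, Real.norm_of_nonneg (diskPoint_nonneg hy)]

lemma analyticAt_diskPoint (hy : 0 ≤ y) : AnalyticAt ℝ diskPoint y := by
  have hsqrt : AnalyticAt ℝ Real.sqrt (1 + 8 * y) :=
    (Real.contDiffAt_sqrt (n := ⊤) (by positivity)).analyticAt
  have h := hsqrt.comp (g := Real.sqrt) (f := fun y ↦ 1 + 8 * y) (x := y) (by fun_prop)
  exact (h.sub analyticAt_const).div analyticAt_const two_ne_zero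

lemma intervalIntegrable_log_norm_eval_diskPoint (g : ℂ[X]) {α β : ℝ} (hα : 0 ≤ α) (hβ : 0 ≤ β) :
    IntervalIntegrable (fun y ↦ Real.log ‖g.eval (diskPoint y : ℂ)‖) volume α β := by
  have h : MeromorphicOn (fun y ↦ g.eval (diskPoint y : ℂ)) (uIcc α β) := fun y hy ↦ by
    have hpoint : AnalyticAt ℝ (fun y ↦ (diskPoint y : ℂ)) y :=
      (Complex.ofRealCLM.analyticAt _).comp (analyticAt_diskPoint ((le_min hα hβ).trans hy.1))
    simpa using (hpoint.aeval_polynomial g).meromorphicAt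
  exact h.intervalIntegrable_log_norm

lemma ae_eval_diskPoint_ne_zero {g : ℂ[X]} (hg : g ≠ 0) :
    ∀ᵐ y : ℝ, 0 ≤ y → g.eval (diskPoint y : ℂ) ≠ 0 := by
  have hfin := g.roots.toFinset.finite_toSet.image fun z ↦ z.re * (1 + z.re) / 2
  filter_upwards [hfin.countable.ae_notMem volume] with y hy hy0 hroot
  refine hy ⟨diskPoint y, by simpa [hg] using hroot, ?_⟩
  simpa using diskPoint_mul_one_add hy0

end DiskPoint

section LowerBound

variable {a : ℝ}

lemma greenKernel_diskPoint_le_of_near {y : ℝ} (hy0 : 0 ≤ y) (hya : y ≤ 1 - a) (ha : 0 < a)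
    {ζ : ℂ} (hζ : ‖ζ‖ < 1) (hnear : 1 - ‖ζ‖ ≤ a / 3) :
    greenKernel ζ (diskPoint y) ≤ 6 * (1 - ‖ζ‖) / a := by
  have hs0 := diskPoint_nonneg hy0
  have hgap : 2 * a / 3 ≤ 1 - diskPoint y := by linarith [le_one_sub_diskPoint hy0 (by linarith)]
  have hpole : 0 < ‖ζ‖ - diskPoint y := by linarith
  have hkernel := greenKernel_le hζ (z := diskPoint y) (by rw [norm_diskPoint hy0]; linarith)
    (by rw [norm_diskPoint hy0]; linarith)
  rw [norm_diskPoint hy0, abs_sub_comm, abs_of_pos hpole] at hkernel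
  have hnum : 0 < 1 - diskPoint y * ‖ζ‖ := by nlinarith [norm_nonneg ζ]
  calc greenKernel ζ (diskPoint y)
      ≤ Real.log ((1 - diskPoint y * ‖ζ‖) / (‖ζ‖ - diskPoint y)) := by
        rwa [Real.log_div hnum.ne' hpole.ne']
    _ ≤ (1 - diskPoint y * ‖ζ‖) / (‖ζ‖ - diskPoint y) - 1 :=
        Real.log_le_sub_one_of_pos (div_pos hnum hpole)
    _ = (1 - ‖ζ‖) * (1 + diskPoint y) / (‖ζ‖ - diskPoint y) := by
        field_simp
        ring
    _ ≤ (1 - ‖ζ‖) * 2 / (a / 3) := by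
        gcongr <;> linarith
    _ = 6 * (1 - ‖ζ‖) / a := by ring

lemma greenKernel_diskPoint_le {y : ℝ} (hy0 : 0 ≤ y) (hy1 : y < 1) {ζ : ℂ} (hζ : ‖ζ‖ < 1)
    (hne : y ≠ ‖ζ‖ * (1 + ‖ζ‖) / 2) :
    greenKernel ζ (diskPoint y) ≤ Real.log (3 / 2 * (1 - y + (1 - ‖ζ‖))) -
      Real.log |y - ‖ζ‖ * (1 + ‖ζ‖) / 2| := by
  have hs0 := diskPoint_nonneg hy0
  have hs1 : diskPoint y < 1 := by linarith [le_one_sub_diskPoint hy0 hy1.le]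
  have hsy := diskPoint_mul_one_add hy0
  have hsum : (diskPoint y - ‖ζ‖) * ((1 + diskPoint y + ‖ζ‖) / 2) =
      y - ‖ζ‖ * (1 + ‖ζ‖) / 2 := by linarith
  have hdist : 0 < |y - ‖ζ‖ * (1 + ‖ζ‖) / 2| := abs_pos.2 (sub_ne_zero.2 hne)
  have hpole : 2 / 3 * |y - ‖ζ‖ * (1 + ‖ζ‖) / 2| ≤ |diskPoint y - ‖ζ‖| := by
    rw [← hsum, abs_mul, abs_of_pos (show 0 < (1 + diskPoint y + ‖ζ‖) / 2 by positivity)]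
    nlinarith [abs_nonneg (diskPoint y - ‖ζ‖)]
  have hnum : 1 - diskPoint y * ‖ζ‖ ≤ 1 - y + (1 - ‖ζ‖) := by
    nlinarith [one_sub_diskPoint_le hy0 hy1.le]
  have hlogpole := Real.log_le_log (by positivity) hpole
  have hlognum := Real.log_le_log (by nlinarith [norm_nonneg ζ]) hnum
  rw [Real.log_mul (by norm_num) hdist.ne'] at hlogpole
  rw [Real.log_mul (by norm_num) (by linarith), show (3 : ℝ) / 2 = (2 / 3)⁻¹ by norm_num,
    Real.log_inv]
  have hkernel := greenKernel_le hζ (z := diskPoint y) (by rwa [norm_diskPoint hy0]) (by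
    rw [norm_diskPoint hy0]
    rintro h
    exact hne (by rw [← h, hsy]))
  rw [norm_diskPoint hy0] at hkernel
  linarith

lemma one_add_log_le {σ : ℝ} (hσ : 1 / 3 ≤ σ) : 1 + Real.log (6 + 3 * σ) ≤ 9 * σ := by
  have hlog7 : Real.log 7 ≤ 2 := by
    rw [Real.log_le_iff_le_exp (by norm_num), show (2 : ℝ) = 1 + 1 by norm_num, Real.exp_add]
    nlinarith [Real.exp_one_gt_d9]
  have htangent := Real.log_le_sub_one_of_pos (show 0 < (6 + 3 * σ) / 7 by positivity)
  rw [Real.log_div (by positivity) (by norm_num)] at htangent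
  linarith

lemma intervalIntegrable_greenKernel_diskPoint (ζ : ℂ) {α β : ℝ} (hα : 0 ≤ α) (hβ : 0 ≤ β) :
    IntervalIntegrable (fun y ↦ greenKernel ζ (diskPoint y)) volume α β := by
  have h := (intervalIntegrable_log_norm_eval_diskPoint (1 - C (conj ζ) * X) hα hβ).sub
    (intervalIntegrable_log_norm_eval_diskPoint (X - C ζ) hα hβ)
  simp only [eval_sub, eval_one, eval_mul, eval_C, eval_X] at h
  exact h

lemma integral_greenKernel_diskPoint_le_of_near (ha0 : 0 < a) (ha : a ≤ 1 / 2) {ζ : ℂ}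
    (hζ : ‖ζ‖ < 1) (hnear : 1 - ‖ζ‖ ≤ a / 3) :
    ∫ y in (1 - 2 * a)..(1 - a), greenKernel ζ (diskPoint y) ≤ 6 * (1 - ‖ζ‖) := by
  calc ∫ y in (1 - 2 * a)..(1 - a), greenKernel ζ (diskPoint y)
      ≤ ∫ _ in (1 - 2 * a)..(1 - a), 6 * (1 - ‖ζ‖) / a :=
        integral_mono_on (by linarith)
          (intervalIntegrable_greenKernel_diskPoint ζ (by linarith) (by linarith))
          intervalIntegrable_const fun y hy ↦
            greenKernel_diskPoint_le_of_near (by linarith [hy.1]) hy.2 ha0 hζ hnear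
    _ = 6 * (1 - ‖ζ‖) := by
        rw [intervalIntegral.integral_const, smul_eq_mul]
        field_simp
        ring

lemma integral_greenKernel_diskPoint_le_of_far (ha0 : 0 < a) (ha : a ≤ 1 / 2) {ζ : ℂ}
    (hζ : ‖ζ‖ < 1) (hfar : a / 3 ≤ 1 - ‖ζ‖) :
    ∫ y in (1 - 2 * a)..(1 - a), greenKernel ζ (diskPoint y) ≤ 9 * (1 - ‖ζ‖) := by
  have hI : 1 - 2 * a ≤ 1 - a := by linarith
  set r := 1 - ‖ζ‖
  set τ := ‖ζ‖ * (1 + ‖ζ‖) / 2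
  have hlogint := mul_log_half_sub_one_le_integral_log_abs_sub hI τ
  have hσ := one_add_log_le (σ := r / a) (by rw [le_div_iff₀ ha0]; linarith)
  rw [show 1 - a - (1 - 2 * a) = a by ring] at hlogint
  calc ∫ y in (1 - 2 * a)..(1 - a), greenKernel ζ (diskPoint y)
      ≤ ∫ y in (1 - 2 * a)..(1 - a), (Real.log (3 / 2 * (2 * a + r)) - Real.log |y - τ|) := by
        refine integral_mono_ae_restrict hI
          (intervalIntegrable_greenKernel_diskPoint ζ (by linarith) (by linarith))
          (intervalIntegrable_const.sub (intervalIntegrable_log_abs_sub _ _ _)) ?_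
        filter_upwards [ae_restrict_mem measurableSet_Icc,
          ae_restrict_of_ae (Measure.ae_ne volume τ)] with y hy hne
        refine (greenKernel_diskPoint_le (by linarith [hy.1]) (by linarith [hy.2]) hζ hne).trans ?_
        gcongr
        · linarith [hy.2]
        · linarith [hy.1]
    _ = a * Real.log (3 / 2 * (2 * a + r)) - ∫ y in (1 - 2 * a)..(1 - a), Real.log |y - τ| := by
        rw [integral_sub intervalIntegrable_const (intervalIntegrable_log_abs_sub _ _ _),
          intervalIntegral.integral_const, smul_eq_mul]
        ring
    _ ≤ a * (1 + Real.log (6 + 3 * (r / a))) := by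
        have hscale : 3 / 2 * (2 * a + r) = a / 2 * (6 + 3 * (r / a)) := by field_simp; ring
        rw [hscale, Real.log_mul (by positivity) (by positivity)]
        linarith
    _ ≤ a * (9 * (r / a)) := by gcongr
    _ = 9 * r := by field_simp

lemma integral_greenKernel_diskPoint_le (ha0 : 0 < a) (ha : a ≤ 1 / 2) {ζ : ℂ} (hζ : ‖ζ‖ < 1) :
    ∫ y in (1 - 2 * a)..(1 - a), greenKernel ζ (diskPoint y) ≤ 9 * (1 - ‖ζ‖) := by
  rcases le_total (1 - ‖ζ‖) (a / 3) with hnear | hfar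
  · linarith [integral_greenKernel_diskPoint_le_of_near ha0 ha hζ hnear]
  · exact integral_greenKernel_diskPoint_le_of_far ha0 ha hζ hfar

variable {g : ℂ[X]} {B : ℝ}

lemma log_sub_log_norm_eval_diskPoint_le_of_ne_zero {y : ℝ} (hy0 : 0 ≤ y) (hya : y ≤ 1 - a)
    (ha0 : 0 < a) (hgB : ∀ w : ℂ, ‖w‖ = 1 → ‖g.eval w‖ ≤ B)
    (hg0 : ∀ z : ℂ, ‖z‖ < 1 → g.eval z ≠ 0) :
    Real.log B - Real.log ‖g.eval (diskPoint y : ℂ)‖ ≤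
      9 / a * (Real.log B - Real.log ‖g.eval 0‖) := by
  have hgap : 2 / 3 * a ≤ 1 - diskPoint y := by
    linarith [le_one_sub_diskPoint hy0 (by linarith)]
  have hharnack := log_sub_log_norm_le_mul_center (g := g.eval) (c := 0) (w := diskPoint y)
    (R := (1 + diskPoint y) / 2) ((AnalyticOnNhd.eval_polynomial g).mono (subset_univ _))
    (fun z hz ↦ hg0 z (by rw [mem_closedBall_zero_iff] at hz; linarith))
    (fun z hz ↦ norm_eval_le_of_forall_norm_eq_one hgB (by
      rw [mem_sphere_zero_iff_norm] at hz; linarith))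
    (by rw [mem_ball_zero_iff, norm_diskPoint hy0]; linarith)
  have hcenter : 0 ≤ Real.log B - Real.log ‖g.eval 0‖ :=
    sub_nonneg.2 <| Real.log_le_log (norm_pos_iff.2 (hg0 0 (by simp)))
      (norm_eval_le_of_forall_norm_eq_one hgB (by simp))
  refine hharnack.trans (mul_le_mul_of_nonneg_right ?_ hcenter)
  rw [sub_zero, norm_diskPoint hy0, div_le_div_iff₀ (by linarith) ha0]
  nlinarith [diskPoint_nonneg hy0]

lemma integral_log_sub_log_norm_eval_diskPoint_le_of_ne_zero (ha0 : 0 < a) (ha : a ≤ 1 / 2)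
    (hgB : ∀ w : ℂ, ‖w‖ = 1 → ‖g.eval w‖ ≤ B) (hg0 : ∀ z : ℂ, ‖z‖ < 1 → g.eval z ≠ 0) :
    ∫ y in (1 - 2 * a)..(1 - a), (Real.log B - Real.log ‖g.eval (diskPoint y : ℂ)‖) ≤
      9 * (Real.log B - Real.log ‖g.eval 0‖) := by
  calc ∫ y in (1 - 2 * a)..(1 - a), (Real.log B - Real.log ‖g.eval (diskPoint y : ℂ)‖)
      ≤ ∫ _ in (1 - 2 * a)..(1 - a), 9 / a * (Real.log B - Real.log ‖g.eval 0‖) :=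
        integral_mono_on (by linarith) (intervalIntegrable_const.sub
          (intervalIntegrable_log_norm_eval_diskPoint g (by linarith) (by linarith)))
          intervalIntegrable_const fun y hy ↦ log_sub_log_norm_eval_diskPoint_le_of_ne_zero
            (by linarith [hy.1]) hy.2 ha0 hgB hg0
    _ = 9 * (Real.log B - Real.log ‖g.eval 0‖) := by
        rw [intervalIntegral.integral_const, smul_eq_mul]
        field_simp
        ring

end LowerBound

section Reflection

variable {ζ : ℂ}

lemma norm_one_sub_conj_mul_of_norm_eq_one {w : ℂ} (hw : ‖w‖ = 1) :
    ‖1 - conj ζ * w‖ = ‖w - ζ‖ := by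
  refine (sq_eq_sq₀ (norm_nonneg _) (norm_nonneg _)).1 ?_
  rw [norm_one_sub_conj_mul_sq, hw]
  ring

lemma log_norm_eval_X_sub_C_mul {p : ℂ[X]} {z : ℂ} (hζ : ‖ζ‖ < 1) (hz : ‖z‖ ≤ 1)
    (hp : ((X - C ζ) * p).eval z ≠ 0) :
    Real.log ‖((X - C ζ) * p).eval z‖ =
      Real.log ‖((1 - C (conj ζ) * X) * p).eval z‖ - greenKernel ζ z := by
  simp only [eval_mul, eval_sub, eval_X, eval_C, eval_one, norm_mul, greenKernel] at hp ⊢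
  rw [Real.log_mul (norm_ne_zero_iff.2 (left_ne_zero_of_mul hp))
      (norm_ne_zero_iff.2 (right_ne_zero_of_mul hp)),
    Real.log_mul (norm_ne_zero_iff.2 (one_sub_conj_mul_ne_zero hζ hz))
      (norm_ne_zero_iff.2 (right_ne_zero_of_mul hp))]
  ring

variable {a B : ℝ}

lemma integral_log_sub_log_norm_eval_X_sub_C_mul_le {p : ℂ[X]} (ha0 : 0 < a) (ha : a ≤ 1 / 2)
    (hζ : ‖ζ‖ < 1) (hp : ((X - C ζ) * p).eval 0 ≠ 0)
    (h : ∫ y in (1 - 2 * a)..(1 - a), (Real.log B -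
        Real.log ‖((1 - C (conj ζ) * X) * p).eval (diskPoint y : ℂ)‖) ≤
      9 * (Real.log B - Real.log ‖((1 - C (conj ζ) * X) * p).eval 0‖)) :
    ∫ y in (1 - 2 * a)..(1 - a), (Real.log B -
        Real.log ‖((X - C ζ) * p).eval (diskPoint y : ℂ)‖) ≤
      9 * (Real.log B - Real.log ‖((X - C ζ) * p).eval 0‖) := by
  have hsplit : ∀ᵐ y : ℝ, y ∈ uIoc (1 - 2 * a) (1 - a) →
      Real.log B - Real.log ‖((X - C ζ) * p).eval (diskPoint y : ℂ)‖ =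
        (Real.log B - Real.log ‖((1 - C (conj ζ) * X) * p).eval (diskPoint y : ℂ)‖) +
          greenKernel ζ (diskPoint y) := by
    filter_upwards [ae_eval_diskPoint_ne_zero (g := (X - C ζ) * p) fun h ↦ hp (by simp [h])]
      with y hy hyI
    rw [uIoc_of_le (by linarith)] at hyI
    have hy0 : 0 ≤ y := by linarith [hyI.1]
    rw [log_norm_eval_X_sub_C_mul hζ _ (hy hy0)]
    · ring
    · rw [norm_diskPoint hy0]
      exact diskPoint_le_one (by linarith [hyI.2])
  have hcenter := log_norm_eval_X_sub_C_mul hζ (by simp) hp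
  have hzeta : ζ ≠ 0 := by
    rintro rfl
    simp at hp
  have hpole : 1 - ‖ζ‖ ≤ greenKernel ζ 0 := by
    have := Real.log_le_sub_one_of_pos (norm_pos_iff.2 hzeta)
    simp only [greenKernel, mul_zero, sub_zero, norm_one, Real.log_one, zero_sub, norm_neg]
    linarith
  rw [integral_congr_ae hsplit, integral_add (intervalIntegrable_const.sub
      (intervalIntegrable_log_norm_eval_diskPoint _ (by linarith) (by linarith)))
    (intervalIntegrable_greenKernel_diskPoint ζ (by linarith) (by linarith)), hcenter]
  linarith [integral_greenKernel_diskPoint_le ha0 ha hζ]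

lemma integral_log_sub_log_norm_eval_prod_mul_le (ha0 : 0 < a) (ha : a ≤ 1 / 2)
    {S : Multiset ℂ} (hS : ∀ ζ ∈ S, ‖ζ‖ < 1) {h : ℂ[X]} (hh : ∀ z : ℂ, ‖z‖ < 1 → h.eval z ≠ 0)
    (hB : ∀ w : ℂ, ‖w‖ = 1 → ‖((S.map (X - C ·)).prod * h).eval w‖ ≤ B)
    (h0 : ((S.map (X - C ·)).prod * h).eval 0 ≠ 0) :
    ∫ y in (1 - 2 * a)..(1 - a),
        (Real.log B - Real.log ‖((S.map (X - C ·)).prod * h).eval (diskPoint y : ℂ)‖) ≤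
      9 * (Real.log B - Real.log ‖((S.map (X - C ·)).prod * h).eval 0‖) := by
  induction S using Multiset.induction generalizing h with
  | empty =>
    simp only [Multiset.map_zero, Multiset.prod_zero, one_mul] at hB ⊢
    exact integral_log_sub_log_norm_eval_diskPoint_le_of_ne_zero ha0 ha hB hh
  | cons ζ S ih =>
    rw [Multiset.forall_mem_cons] at hS
    have hreflect : (S.map (X - C ·)).prod * ((1 - C (conj ζ) * X) * h) =
        (1 - C (conj ζ) * X) * ((S.map (X - C ·)).prod * h) := mul_left_comm _ _ _
    rw [Multiset.map_cons, Multiset.prod_cons, mul_assoc] at hB h0 ⊢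
    refine integral_log_sub_log_norm_eval_X_sub_C_mul_le ha0 ha hS.1 h0 ?_
    rw [← hreflect]
    refine ih hS.2 (fun z hz ↦ ?_) (fun w hw ↦ ?_) ?_
    · rw [eval_mul]
      refine mul_ne_zero ?_ (hh z hz)
      simpa using one_sub_conj_mul_ne_zero hS.1 hz.le
    · refine le_of_eq_of_le ?_ (hB w hw)
      rw [hreflect, eval_mul, eval_mul (p := X - C ζ), norm_mul, norm_mul]
      simp only [eval_sub, eval_one, eval_mul, eval_C, eval_X,
        norm_one_sub_conj_mul_of_norm_eq_one hw]
    · rw [hreflect, eval_mul]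
      rw [eval_mul] at h0
      simpa using right_ne_zero_of_mul h0

lemma integral_log_sub_log_norm_eval_diskPoint_le {g : ℂ[X]} (ha0 : 0 < a) (ha : a ≤ 1 / 2)
    (hgB : ∀ w : ℂ, ‖w‖ = 1 → ‖g.eval w‖ ≤ B) (hg0 : g.eval 0 ≠ 0) :
    ∫ y in (1 - 2 * a)..(1 - a), (Real.log B - Real.log ‖g.eval (diskPoint y : ℂ)‖) ≤
      9 * (Real.log B - Real.log ‖g.eval 0‖) := by
  have hfactor : g = ((g.roots.filter (‖·‖ < 1)).map (X - C ·)).prod *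
      (C g.leadingCoeff * ((g.roots.filter (¬ ‖·‖ < 1)).map (X - C ·)).prod) := by
    rw [mul_left_comm, ← Multiset.prod_add, ← Multiset.map_add, Multiset.filter_add_not]
    exact (IsAlgClosed.splits g).eq_prod_roots
  rw [hfactor] at hgB hg0 ⊢
  refine integral_log_sub_log_norm_eval_prod_mul_le ha0 ha
    (fun ζ hζ ↦ (Multiset.mem_filter.1 hζ).2) (fun z hz ↦ ?_) hgB hg0
  have hlead : g.leadingCoeff ≠ 0 := by
    simp only [eval_mul, eval_C] at hg0
    exact left_ne_zero_of_mul (right_ne_zero_of_mul hg0)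
  rw [eval_mul, eval_C, eval_multiset_prod, Multiset.map_map]
  refine mul_ne_zero hlead (Multiset.prod_ne_zero fun hmem ↦ ?_)
  obtain ⟨ζ, hζ, hzero⟩ := Multiset.mem_map.1 hmem
  rw [Function.comp_apply, eval_sub, eval_X, eval_C, sub_eq_zero] at hzero
  exact (Multiset.mem_filter.1 hζ).2 (hzero ▸ hz)

end Reflection

section CoefficientBounds

lemma norm_eval_mul_one_sub_norm_le {p : ℂ[X]} {M : ℝ} (hp : ∀ i, ‖p.coeff i‖ ≤ M) {w : ℂ}
    (hw : ‖w‖ ≤ 1) : ‖p.eval w‖ * (1 - ‖w‖) ≤ M := by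
  have hM : 0 ≤ M := (norm_nonneg _).trans (hp 0)
  calc ‖p.eval w‖ * (1 - ‖w‖)
      ≤ (∑ i ∈ Finset.range (p.natDegree + 1), M * ‖w‖ ^ i) * (1 - ‖w‖) := by
        refine mul_le_mul_of_nonneg_right ?_ (sub_nonneg.2 hw)
        rw [eval_eq_sum_range]
        refine (norm_sum_le _ _).trans (Finset.sum_le_sum fun i _ ↦ ?_)
        rw [norm_mul, norm_pow]
        exact mul_le_mul_of_nonneg_right (hp i) (by positivity)
    _ = M * (1 - ‖w‖ ^ (p.natDegree + 1)) := by
        rw [← Finset.mul_sum, ← mul_neg_geom_sum]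
        ring
    _ ≤ M := mul_le_of_le_one_right hM (sub_le_self _ (by positivity))

lemma norm_one_sub_sq_le {w : ℂ} (hw : ‖w‖ = 1) : ‖1 - w‖ ^ 2 ≤ 8 * (1 - ‖w * (1 + w) / 2‖) := by
  have hpar := parallelogram_law_with_norm ℝ 1 w
  rw [norm_one, hw] at hpar
  rw [norm_div, norm_mul, hw, Complex.norm_ofNat]
  nlinarith [norm_nonneg (1 + w), norm_nonneg (1 - w)]

lemma norm_eval_comp_mul_one_sub_sq_le {p : ℂ[X]} {M : ℝ} (hp : ∀ i, ‖p.coeff i‖ ≤ M) {w : ℂ}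
    (hw : ‖w‖ = 1) : ‖(p.comp (C (1 / 2) * X * (1 + X)) * (1 - X) ^ 2).eval w‖ ≤ 8 * M := by
  have hgap := norm_one_sub_sq_le hw
  have hpoint : (C (1 / 2) * X * (1 + X) : ℂ[X]).eval w = w * (1 + w) / 2 := by
    simp only [eval_mul, eval_C, eval_X, eval_add, eval_one]
    ring
  rw [eval_mul, eval_comp, hpoint, eval_pow, eval_sub, eval_one, eval_X, norm_mul, norm_pow]
  calc ‖p.eval (w * (1 + w) / 2)‖ * ‖1 - w‖ ^ 2
      ≤ ‖p.eval (w * (1 + w) / 2)‖ * (8 * (1 - ‖w * (1 + w) / 2‖)) := by gcongr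
    _ = 8 * (‖p.eval (w * (1 + w) / 2)‖ * (1 - ‖w * (1 + w) / 2‖)) := by ring
    _ ≤ 8 * M := by
        gcongr
        exact norm_eval_mul_one_sub_norm_le hp (by nlinarith [sq_nonneg ‖1 - w‖])

variable {a M : ℝ} {p : ℝ[X]}

lemma log_norm_eval_comp_diskPoint_le {y : ℝ} (hy0 : 0 ≤ y) (hy1 : y < 1) :
    Real.log ‖((p.map Complex.ofRealHom).comp (C (1 / 2) * X * (1 + X)) * (1 - X) ^ 2).eval
      (diskPoint y : ℂ)‖ ≤ Real.log |p.eval y| := by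
  have hs0 := diskPoint_nonneg hy0
  have hgap : 0 < 1 - diskPoint y := by linarith [le_one_sub_diskPoint hy0 hy1.le]
  have hvalue : ((p.map Complex.ofRealHom).comp (C (1 / 2) * X * (1 + X)) * (1 - X) ^ 2).eval
      (diskPoint y : ℂ) = ((p.eval y * (1 - diskPoint y) ^ 2 : ℝ) : ℂ) := by
    have hpoint : (C (1 / 2) * X * (1 + X) : ℂ[X]).eval (diskPoint y : ℂ) = (y : ℂ) := by
      conv_rhs => rw [← diskPoint_mul_one_add hy0]
      simp only [eval_mul, eval_C, eval_X, eval_add, eval_one]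
      push_cast
      ring
    rw [eval_mul, eval_comp, hpoint, ← Complex.ofRealHom_eq_coe, eval_map_apply]
    simp
  rw [hvalue, Complex.norm_real, Real.norm_eq_abs, abs_mul, abs_of_pos (pow_pos hgap 2)]
  rcases eq_or_ne (p.eval y) 0 with hroot | hroot
  · simp [hroot]
  · exact Real.log_le_log (by positivity)
      (mul_le_of_le_one_right (abs_nonneg _) (pow_le_one₀ hgap.le (by linarith)))

lemma neg_le_integral_log_abs_eval (ha0 : 0 < a) (ha : a ≤ 1 / 2) (hp : ∀ i, |p.coeff i| ≤ M)
    (hp0 : 1 ≤ |p.coeff 0|) :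
    -(9 * Real.log (8 * M)) ≤ ∫ y in (1 - 2 * a)..(1 - a), Real.log |p.eval y| := by
  have hM : 1 ≤ M := hp0.trans (hp 0)
  set g := (p.map Complex.ofRealHom).comp (C (1 / 2) * X * (1 + X)) * (1 - X) ^ 2 with hg
  have hcenter : ‖g.eval 0‖ = |p.coeff 0| := by
    simp [hg, ← coeff_zero_eq_eval_zero]
  have hgB : ∀ w : ℂ, ‖w‖ = 1 → ‖g.eval w‖ ≤ 8 * M := fun w hw ↦
    norm_eval_comp_mul_one_sub_sq_le (fun i ↦ by simpa using hp i) hw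
  have hdisc := integral_log_sub_log_norm_eval_diskPoint_le ha0 ha hgB
    (norm_pos_iff.1 (by rw [hcenter]; linarith))
  have hmono : ∫ y in (1 - 2 * a)..(1 - a), -Real.log |p.eval y| ≤
      ∫ y in (1 - 2 * a)..(1 - a), (Real.log (8 * M) - Real.log ‖g.eval (diskPoint y : ℂ)‖) := by
    refine integral_mono_on (by linarith) (intervalIntegrable_log_abs_eval p _ _).neg
      (intervalIntegrable_const.sub
        (intervalIntegrable_log_norm_eval_diskPoint g (by linarith) (by linarith))) fun y hy ↦ ?_
    have hlog := log_norm_eval_comp_diskPoint_le (p := p) (y := y) (by linarith [hy.1])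
      (by linarith [hy.2])
    linarith [Real.log_nonneg (show 1 ≤ 8 * M by linarith)]
  rw [intervalIntegral.integral_neg] at hmono
  rw [hcenter] at hdisc
  linarith [Real.log_nonneg hp0]

lemma neg_le_integral_log_abs_eval_X_pow_mul (ha0 : 0 < a) (ha : a ≤ 1 / 3)
    (hp : ∀ i, |p.coeff i| ≤ M) (hp0 : 1 ≤ |p.coeff 0|) (k : ℕ) :
    -(6 * a ^ 2 * k + 9 * Real.log (8 * M)) ≤
      ∫ y in (1 - 2 * a)..(1 - a), Real.log |(X ^ k * p).eval y| := by
  have hpne : p ≠ 0 := by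
    rintro rfl
    norm_num at hp0
  have hlog : ∀ y ∈ Icc (1 - 2 * a) (1 - a), -(6 * a * k) ≤ Real.log |(X ^ k : ℝ[X]).eval y| := by
    intro y hy
    have hy0 : 0 < y := by linarith [hy.1]
    have hinv : 1 - y⁻¹ ≤ Real.log y := Real.one_sub_inv_le_log_of_pos hy0
    have hbound : y⁻¹ ≤ 1 + 6 * a := by
      rw [inv_le_iff_one_le_mul₀ hy0]
      nlinarith [hy.1]
    rw [eval_pow, eval_X, abs_pow, Real.log_pow, abs_of_pos hy0]
    nlinarith [(Nat.cast_nonneg k : (0 : ℝ) ≤ k)]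
  have hmonomial := integral_mono_on (by linarith) intervalIntegrable_const
    (intervalIntegrable_log_abs_eval (X ^ k) (1 - 2 * a) (1 - a)) hlog
  rw [intervalIntegral.integral_const, smul_eq_mul] at hmonomial
  rw [integral_log_abs_eval_mul (pow_ne_zero k X_ne_zero) hpne]
  linarith [neg_le_integral_log_abs_eval ha0 (by linarith) hp hp0]

end CoefficientBounds

section Counting

lemma integral_abs_eq_abs_integral {f : ℝ → ℝ} {α β ε : ℝ} (hαβ : α ≤ β) (hε : |ε| = 1)
    (hf : ∀ᵐ x, x ∈ Ioo α β → 0 ≤ ε * f x) : ∫ x in α..β, |f x| = |∫ x in α..β, f x| := by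
  have habs : ∫ x in α..β, |f x| = ε * ∫ x in α..β, f x := by
    rw [← intervalIntegral.integral_const_mul]
    refine integral_congr_ae ?_
    filter_upwards [hf, Measure.ae_ne volume β] with x hx hxβ hxI
    rw [uIoc_of_le hαβ] at hxI
    rw [← abs_of_nonneg (hx ⟨hxI.1, hxI.2.lt_of_ne hxβ⟩), abs_mul, hε, one_mul]
  rw [← abs_of_nonneg (integral_nonneg hαβ fun x _ ↦ abs_nonneg (f x)), habs, abs_mul, hε, one_mul]

variable {a M δ : ℝ} {q : ℕ}

lemma exists_prod_integral_abs_eval_mul_le {P : ℝ[X]} (ha0 : 0 < a)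
    (hmom : ∀ j ≤ q, |∫ x in (0 : ℝ)..1, P.eval (1 - a - a * x) * x ^ j| ≤ δ)
    (hsc : ¬ SignChangesAtLeast (fun y ↦ P.eval y) (Ioo (1 - 2 * a) (1 - a)) (q + 1)) :
    ∃ Ξ : Multiset ℝ, Ξ.card ≤ q ∧
      ∫ y in (1 - 2 * a)..(1 - a), |(P * (Ξ.map (X - C ·)).prod).eval y| ≤
        a * ((2 * a) ^ Ξ.card * δ) := by
  have hI : 1 - 2 * a ≤ 1 - a := by linarith
  obtain ⟨Ξ, hcard, hΞ, ε, hε, hsign⟩ := exists_roots_aligning_sign hI hsc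
  refine ⟨Ξ, hcard, ?_⟩
  set Q := (Ξ.map (X - C ·)).prod
  have hscale : ∫ y in (1 - 2 * a)..(1 - a), (P * Q).eval y =
      a * ∫ x in (0 : ℝ)..1, (P * Q).eval (1 - a - a * x) := by
    have h := intervalIntegral.mul_integral_comp_sub_mul (a := 0) (b := 1)
      (f := fun y ↦ (P * Q).eval y) a (1 - a)
    rw [h]
    congr 1 <;> ring
  have hmoment := abs_integral_mul_prod_affine_le (f := fun x ↦ P.eval (1 - a - a * x))
    (by fun_prop) hmom Ξ (c := 1 - a) (a := a) (R := 2 * a) (i := 0) (fun ξ hξ ↦ by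
      rw [abs_of_nonneg (sub_nonneg.2 (hΞ ξ hξ).2), abs_of_pos ha0]
      linarith [(hΞ ξ hξ).1]) (by omega)
  rw [integral_abs_eq_abs_integral hI hε (by simpa only [eval_mul] using hsign), hscale, abs_mul,
    abs_of_pos ha0]
  gcongr
  simpa only [eval_mul, pow_zero, mul_one] using hmoment

lemma neg_log_le_of_moments {k : ℕ} {p : ℝ[X]} (ha0 : 0 < a) (ha : a ≤ 1 / 3)
    (hp : ∀ i, |p.coeff i| ≤ M) (hp0 : 1 ≤ |p.coeff 0|) (hδ : 0 < δ)
    (hmom : ∀ j ≤ q, |∫ x in (0 : ℝ)..1, (X ^ k * p).eval (1 - a - a * x) * x ^ j| ≤ δ)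
    (hsc : ¬ SignChangesAtLeast (fun y ↦ (X ^ k * p).eval y) (Ioo (1 - 2 * a) (1 - a)) (q + 1)) :
    -Real.log δ ≤ q * (1 + 2 * Real.log 2) + 6 * a * k + 9 / a * Real.log (8 * M) := by
  have hI : 1 - 2 * a ≤ 1 - a := by linarith
  have hlen : 1 - a - (1 - 2 * a) = a := by ring
  have hpne : X ^ k * p ≠ 0 := by
    refine mul_ne_zero (pow_ne_zero k X_ne_zero) ?_
    rintro rfl
    norm_num at hp0
  obtain ⟨Ξ, hcard, hL1⟩ := exists_prod_integral_abs_eval_mul_le ha0 hmom hsc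
  have hQ : (Ξ.map (X - C ·)).prod ≠ 0 :=
    (monic_multiset_prod_of_monic Ξ _ fun ξ _ ↦ monic_X_sub_C ξ).ne_zero
  have hupper := integral_log_abs_eval_le (mul_ne_zero hpne hQ) hI
    (E := (2 * a) ^ Ξ.card * δ) (by positivity) (by rwa [hlen])
  have hlowerP := neg_le_integral_log_abs_eval_X_pow_mul ha0 ha hp hp0 k
  have hlowerQ := card_mul_le_integral_log_abs_eval_prod hI Ξ
  rw [integral_log_abs_eval_mul hpne hQ, Real.log_mul (by positivity) hδ.ne', Real.log_pow,
    Real.log_mul two_ne_zero ha0.ne', hlen] at hupper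
  rw [hlen, Real.log_div ha0.ne' two_ne_zero] at hlowerQ
  have hcombined : -Real.log δ * a ≤
      (Ξ.card * (1 + 2 * Real.log 2) + 6 * a * k + 9 / a * Real.log (8 * M)) * a := by
    have hcancel : 9 / a * Real.log (8 * M) * a = 9 * Real.log (8 * M) := by field_simp
    linarith
  refine (le_of_mul_le_mul_right hcombined ha0).trans ?_
  gcongr

lemma two_mul_log_two_le_log_four_mul (hM : 1 ≤ M) : 2 * Real.log 2 ≤ Real.log (4 * M) := by
  rw [← Real.log_rpow two_pos]
  exact Real.log_le_log (by positivity) (by norm_num; linarith)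

lemma log_eight_mul_le (hM : 1 ≤ M) : Real.log (8 * M) ≤ 3 / 2 * Real.log (4 * M) := by
  rw [show 8 * M = 2 * (4 * M) by ring, Real.log_mul two_ne_zero (by positivity)]
  linarith [two_mul_log_two_le_log_four_mul hM]

lemma nine_mul_pi_div_sqrt_two_ge : 39 / 2 ≤ 9 * Real.pi / √2 := by
  have hsqrt2 : √2 < 1.415 := (Real.sqrt_lt' (by norm_num)).2 (by norm_num)
  rw [le_div_iff₀ (by positivity)]
  linarith [Real.pi_gt_d2]

-- For `m log 2 > 4 √(n log (4M))` the conclusion needs no moment information.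
lemma div_mul_log_two_le_of_sub_le {n m : ℕ} {L : ℝ} (hn : 1 ≤ n) (hm : 1 ≤ m) (hM : 1 ≤ M)
    (hadef : a = √(Real.log (4 * M) / n)) (hL : 0 ≤ L)
    (h : n / m * Real.log 2 - L ≤
      m * (1 + 2 * Real.log 2) + 6 * a * n + 9 / a * Real.log (8 * M)) :
    n / m * Real.log 2 ≤ (Real.log 2 + 1) * m + L +
      (9 * Real.pi / √2 + 4) * √(Real.log (4 * M)) * √n := by
  have hn0 : (0 : ℝ) < n := Nat.cast_pos.2 hn
  have hm0 : (0 : ℝ) < m := Nat.cast_pos.2 hm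
  have hlog2 : 0 < Real.log 2 := Real.log_pos one_lt_two
  have hlog4 := two_mul_log_two_le_log_four_mul hM
  have hlog8 := log_eight_mul_le hM
  set Λ := Real.log (4 * M)
  have hΛ0 : 0 < Λ := by linarith
  have hS : 0 < √Λ * √n := by positivity
  have han : a * n = √Λ * √n := by
    rw [hadef, Real.sqrt_div hΛ0.le, div_mul_eq_mul_div, mul_div_assoc, Real.div_sqrt]
  have hΛa : 9 / a * Λ = 9 * (√Λ * √n) := by
    rw [hadef, Real.sqrt_div hΛ0.le]
    field_simp
    rw [Real.sq_sqrt hΛ0.le]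
  have hdisc : 9 / a * Real.log (8 * M) ≤ 9 / a * (3 / 2 * Λ) :=
    mul_le_mul_of_nonneg_left hlog8 (div_nonneg (by norm_num) (hadef ▸ Real.sqrt_nonneg _))
  have hconst : 47 / 2 * (√Λ * √n) ≤ (9 * Real.pi / √2 + 4) * √Λ * √n := by
    rw [mul_assoc (9 * Real.pi / √2 + 4)]
    gcongr
    linarith [nine_mul_pi_div_sqrt_two_ge]
  rcases le_total (m * Real.log 2) (4 * (√Λ * √n)) with hsmall | hlarge
  · linarith
  have hSm : √Λ * √n ≤ m := by nlinarith [Real.log_two_lt_d9]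
  have htrivial : n / m * Real.log 2 ≤ √Λ * √n := by
    rw [div_mul_eq_mul_div, div_le_iff₀ hm0]
    calc n * Real.log 2 ≤ n * Λ := by gcongr; linarith
      _ = (√Λ * √n) * (√Λ * √n) := by
        rw [mul_mul_mul_comm, Real.mul_self_sqrt hΛ0.le, Real.mul_self_sqrt hn0.le, mul_comm]
      _ ≤ √Λ * √n * m := by gcongr
  linarith [show 0 ≤ (Real.log 2 + 1) * m by positivity]

lemma neg_log_two_mul_rpow {n m : ℕ} (hM : 0 < M) :
    -Real.log (2 * ((n : ℝ) + 1) * M * 2 ^ (-(n : ℝ) / m)) =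
      n / m * Real.log 2 - (Real.log (2 * (n : ℝ) + 2) + Real.log M) := by
  rw [Real.log_mul (by positivity) (by positivity), Real.log_mul (by positivity) hM.ne',
    Real.log_rpow two_pos]
  ring_nf

theorem counting_inequality_general {n m k : ℕ} (hn : 1 ≤ n) (hm : 1 ≤ m) (hk : k ≤ n)
    (hadef : a = √(Real.log (4 * M) / n)) (ha : a ≤ 1 / 3) {p : ℝ[X]}
    (hp : ∀ i, |p.coeff i| ≤ M) (hp0 : 1 ≤ |p.coeff 0|)
    (hmom : ∀ j < m, |∫ x in (0 : ℝ)..1, (X ^ k * p).eval (1 - a - a * x) * x ^ j| ≤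
      2 * ((n : ℝ) + 1) * M * 2 ^ (-(n : ℝ) / m))
    (hsc : ¬ SignChangesAtLeast (fun y ↦ (X ^ k * p).eval y) (Ioo (1 - 2 * a) (1 - a)) m) :
    n / m * Real.log 2 ≤ (Real.log 2 + 1) * m + Real.log (2 * (n : ℝ) + 2) + Real.log M +
      (9 * Real.pi / √2 + 4) * √(Real.log (4 * M)) * √n := by
  have hM : 1 ≤ M := hp0.trans (hp 0)
  have ha0 : 0 < a := by
    have := Real.log_pos (show 1 < 4 * M by linarith)
    rw [hadef]
    positivity
  obtain ⟨q, rfl⟩ := Nat.exists_eq_add_of_le' hm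
  have hcore := neg_log_le_of_moments ha0 ha hp hp0 (by positivity)
    (fun j hj ↦ hmom j (Nat.lt_succ_of_le hj)) hsc
  rw [neg_log_two_mul_rpow (by positivity)] at hcore
  rw [add_assoc ((Real.log 2 + 1) * _)]
  have hlogn : 0 ≤ Real.log (2 * (n : ℝ) + 2) :=
    Real.log_nonneg (by linarith [(Nat.cast_nonneg n : (0 : ℝ) ≤ n)])
  refine div_mul_log_two_le_of_sub_le hn hm hM hadef (add_nonneg hlogn (Real.log_nonneg hM))
    (hcore.trans ?_)
  have := Real.log_pos one_lt_two
  gcongr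
  exact Nat.le_succ q

lemma exists_polynomial_sum_Icc_eq (k n : ℕ) (d : ℕ → ℝ) :
    ∃ p : ℝ[X], (∀ x, ∑ j ∈ Finset.Icc k n, d j * x ^ j = (X ^ k * p).eval x) ∧
      ∀ i, p.coeff i = if k + i ≤ n then d (k + i) else 0 := by
  refine ⟨∑ i ∈ Finset.range (n + 1 - k), C (d (k + i)) * X ^ i, fun x ↦ ?_, fun i ↦ ?_⟩
  · rw [← Finset.Ico_add_one_right_eq_Icc, Finset.sum_Ico_eq_sum_range, eval_mul, eval_finsetSum,
      Finset.mul_sum]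
    refine Finset.sum_congr rfl fun i _ ↦ ?_
    rw [eval_mul, eval_C, eval_pow, eval_pow, eval_X, pow_add]
    ring
  · simp only [finsetSum_coeff, coeff_C_mul_X_pow, Finset.sum_ite_eq, Finset.mem_range]
    congr 1
    rw [eq_iff_iff]
    omega

end Counting

/-- The key counting inequality: if `P(x) = ∑_{j=k}^n b_j a_j x^j` is nonzero, its first `m`
moments after the substitution `x ↦ 1 - a - a x` are small, and `P` has exactly `m-1` sign
changes in `I_a = (1-2a, 1-a)` with `a = (log(4M)/n)^(1/2)`, then
`(n/m) log 2 ≤ (log 2 + 1) m + log(2n+2) + log M + (c₁+4)(log 4M)^(1/2) n^(1/2)`. -/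
theorem counting_inequality (n m : ℕ) (hn : 1 ≤ n) (hm : 1 ≤ m) (hmn : m ≤ n)
    (M : ℝ) (hM : 1 ≤ M)
    (a : ℝ) (hadef : a = Real.sqrt (Real.log (4 * M) / (n : ℝ))) (ha : a ≤ 1 / 3)
    (k : ℕ) (hk : k ≤ n)
    (A b : ℕ → ℝ)
    (hA : ∀ j ∈ Finset.Icc k n, A j ∈ Set.Icc (1 : ℝ) M)
    (hb : ∀ j ∈ Finset.Icc k n, b j = -1 ∨ b j = 0 ∨ b j = 1)
    (hbk : b k = -1 ∨ b k = 1)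
    (P : ℝ → ℝ) (hP : P = fun x => ∑ j ∈ Finset.Icc k n, b j * A j * x ^ j)
    (hPne : P ≠ 0)
    (hmom : ∀ j < m,
      |∫ x in (0 : ℝ)..1, P (1 - a - a * x) * x ^ j| ≤
        2 * ((n : ℝ) + 1) * M * (2 : ℝ) ^ (-(n : ℝ) / (m : ℝ)))
    (hsc : SignChangesAtLeast P (Set.Ioo (1 - 2 * a) (1 - a)) (m - 1))
    (hsc' : ¬ SignChangesAtLeast P (Set.Ioo (1 - 2 * a) (1 - a)) m) :
    ((n : ℝ) / (m : ℝ)) * Real.log 2 ≤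
      (Real.log 2 + 1) * (m : ℝ) + Real.log (2 * (n : ℝ) + 2) + Real.log M +
        (9 * Real.pi / Real.sqrt 2 + 4) * Real.sqrt (Real.log (4 * M)) * Real.sqrt (n : ℝ) := by
  obtain ⟨p, hPp, hcoeff⟩ := exists_polynomial_sum_Icc_eq k n fun j ↦ b j * A j
  obtain rfl : P = fun x ↦ (X ^ k * p).eval x := hP.trans (funext hPp)
  refine counting_inequality_general hn hm hk hadef ha (fun i ↦ ?_) ?_ hmom hsc'
  · rw [hcoeff]
    split_ifs with hi
    · obtain ⟨hA1, hAM⟩ := hA (k + i) (Finset.mem_Icc.2 ⟨Nat.le_add_right k i, hi⟩)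
      have hb1 : |b (k + i)| ≤ 1 := by
        rcases hb (k + i) (Finset.mem_Icc.2 ⟨Nat.le_add_right k i, hi⟩) with h | h | h <;> simp [h]
      rw [abs_mul, abs_of_nonneg (zero_le_one.trans hA1)]
      nlinarith
    · rw [abs_zero]
      linarith
  · have hAk := (hA k (Finset.left_mem_Icc.2 hk)).1
    rw [hcoeff, add_zero, if_pos hk, abs_mul, abs_of_nonneg (zero_le_one.trans hAk)]
    rcases hbk with h | h <;> simpa [h] using hAk
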